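/- arXiv:1611.07774 — 7 statements merged into one kernel-verified Lean document; each statement's English description precedes it below -/
import Mathlib

section
/- Let β > 0, b, σ ∈ ℝ, and define ψ(s) = ρ_β((s − b)/√(s + σ²)) for s > −σ², where ρ_β is the Talwar loss. If s > −σ² satisfies |s − b|/√(s + σ²) < β, then ψ is twice differentiable at s with ψ′(s) = (1/2)·(1 − (b + σ²)²/(s + σ²)²) and ψ″(s) = (b + σ²)²/(s + σ²)³ ≥ 0. -/
/-- The Talwar loss function with parameter β > 0. -/
noncomputable def talwar (β : ℝ) (t : ℝ) : ℝ := if |t| ≤ β then t ^ 2 / 2 else β ^ 2 / 2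

theorem talwar_aux (β b σ x : ℝ) (hx : 0 < x + σ ^ 2)
    (hin : |x - b| / Real.sqrt (x + σ ^ 2) < β) :
    HasDerivAt (fun s : ℝ => talwar β ((s - b) / Real.sqrt (s + σ ^ 2)))
      ((1 / 2) * (1 - (b + σ ^ 2) ^ 2 / (x + σ ^ 2) ^ 2)) x ∧
    ∀ᶠ y in nhds x, 0 < y + σ ^ 2 ∧ |y - b| / Real.sqrt (y + σ ^ 2) < β := by
  have hev : ∀ᶠ y in nhds x, 0 < y + σ ^ 2 ∧ |y - b| / Real.sqrt (y + σ ^ 2) < β := by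
    refine Filter.Eventually.and ?_ ?_
    · have hc : ContinuousAt (fun y : ℝ => y + σ ^ 2) x := by fun_prop
      exact hc.eventually (lt_mem_nhds hx)
    · have hc : ContinuousAt (fun y : ℝ => |y - b| / Real.sqrt (y + σ ^ 2)) x := by
        refine ContinuousAt.div (by fun_prop) (by fun_prop) (Real.sqrt_pos.2 hx).ne'
      exact hc.eventually (gt_mem_nhds hin)
  refine ⟨?_, hev⟩
  have h1 : HasDerivAt (fun y : ℝ => (y - b) ^ 2 / (2 * (y + σ ^ 2)))
      ((1 / 2) * (1 - (b + σ ^ 2) ^ 2 / (x + σ ^ 2) ^ 2)) x := by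
    have hn := ((hasDerivAt_id' x).sub_const b).pow 2
    have hd := ((hasDerivAt_id' x).add_const (σ ^ 2)).const_mul 2
    have h := hn.div hd (by positivity)
    refine h.congr_deriv ?_
    have := hx.ne'
    simp
    field_simp
    ring
  refine h1.congr_of_eventuallyEq ?_
  filter_upwards [hev] with y hy
  obtain ⟨hy1, hy2⟩ := hy
  have ha : |(y - b) / Real.sqrt (y + σ ^ 2)| ≤ β := by
    rw [abs_div, abs_of_nonneg (Real.sqrt_nonneg _)]
    exact hy2.le
  rw [talwar, if_pos ha, div_pow, Real.sq_sqrt hy1.le]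
  field_simp

/-- Inside the Talwar threshold, the robust scalar fidelity
ψ(s) = ρ_β((s − b)/√(s + σ²)) is twice differentiable with
ψ′(s) = (1/2)(1 − (b + σ²)²/(s + σ²)²) and ψ″(s) = (b + σ²)²/(s + σ²)³ ≥ 0. -/
theorem talwar_fidelity_inside_threshold (β b σ s : ℝ) (hβ : 0 < β)
    (hs : s > -σ ^ 2)
    (hin : |s - b| / Real.sqrt (s + σ ^ 2) < β) :
    HasDerivAt (fun s : ℝ => talwar β ((s - b) / Real.sqrt (s + σ ^ 2)))
      ((1 / 2) * (1 - (b + σ ^ 2) ^ 2 / (s + σ ^ 2) ^ 2)) s ∧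
    HasDerivAt (deriv (fun s : ℝ => talwar β ((s - b) / Real.sqrt (s + σ ^ 2))))
      ((b + σ ^ 2) ^ 2 / (s + σ ^ 2) ^ 3) s ∧
    0 ≤ (b + σ ^ 2) ^ 2 / (s + σ ^ 2) ^ 3 := by
  have hx : 0 < s + σ ^ 2 := by linarith
  obtain ⟨h1, hev⟩ := talwar_aux β b σ s hx hin
  refine ⟨h1, ?_, by positivity⟩
  have h2 : HasDerivAt (fun y : ℝ => (1 / 2) * (1 - (b + σ ^ 2) ^ 2 / (y + σ ^ 2) ^ 2))
      ((b + σ ^ 2) ^ 2 / (s + σ ^ 2) ^ 3) s := by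
    have hd := ((hasDerivAt_id' s).add_const (σ ^ 2)).pow 2
    have h := (((hasDerivAt_const s ((b + σ ^ 2) ^ 2)).div hd (pow_ne_zero 2 hx.ne')).const_sub 1).const_mul (1 / 2)
    refine h.congr_deriv ?_
    have := hx.ne'
    simp
    field_simp
  refine h2.congr_of_eventuallyEq ?_
  filter_upwards [hev] with y hy
  exact (talwar_aux β b σ y hy.1 hy.2).1.deriv
end

section
/- Let β > 0 and let ρ be the Huber loss with parameter β. Fix b ≥ 0 and σ ∈ ℝ, and define ψ(s) = ρ((s − b)/√(s + σ²)) for s > −σ². If s > 0 satisfies (s − b)/√(s + σ²) > β, then ψ is twice differentiable at s with ψ″(s) = −β(s + 3b + 4σ²)/(4(s + σ²)^{5/2}) < 0. In particular, ψ is not convex on any neighborhood of such a point. -/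
/-- The Huber loss function with parameter β > 0. -/
noncomputable def huber (β : ℝ) (t : ℝ) : ℝ :=
  if |t| ≤ β then t ^ 2 / 2 else β * |t| - β ^ 2 / 2

theorem hf_eventually (β b σ s : ℝ) (hs : 0 < s)
    (hout : (s - b) / Real.sqrt (s + σ ^ 2) > β) (hβ : 0 < β) :
    ∀ᶠ x in nhds s, 0 < x + σ ^ 2 ∧ huber β ((x - b) / Real.sqrt (x + σ ^ 2)) =
      β * ((x - b) / Real.sqrt (x + σ ^ 2)) - β ^ 2 / 2 := by
  have hp : 0 < s + σ ^ 2 := by positivity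
  have hc : ContinuousAt (fun x : ℝ => (x - b) / Real.sqrt (x + σ ^ 2)) s := by
    apply ContinuousAt.div
    · fun_prop
    · fun_prop
    · exact (Real.sqrt_pos.mpr hp).ne'
  have hc2 : ContinuousAt (fun x : ℝ => x + σ ^ 2) s := by fun_prop
  filter_upwards [hc.eventually (lt_mem_nhds hout), hc2.eventually (lt_mem_nhds hp)] with x h1 h2
  refine ⟨h2, ?_⟩
  have h3 : |(x - b) / Real.sqrt (x + σ ^ 2)| = (x - b) / Real.sqrt (x + σ ^ 2) :=
    abs_of_pos (hβ.trans h1)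
  unfold huber
  rw [h3, if_neg (not_le.mpr h1)]

theorem hf_deriv1 (β b σ x : ℝ) (hp : 0 < x + σ ^ 2) :
    HasDerivAt (fun x : ℝ => β * ((x - b) / Real.sqrt (x + σ ^ 2)) - β ^ 2 / 2)
      (β * (x + b + 2 * σ ^ 2) / (2 * Real.sqrt (x + σ ^ 2) ^ 3)) x := by
  have hr := Real.sqrt_pos.mpr hp
  have hsq := Real.sq_sqrt hp.le
  have h1 : HasDerivAt (fun x : ℝ => Real.sqrt (x + σ ^ 2)) (1 / (2 * Real.sqrt (x + σ ^ 2))) x :=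
    ((hasDerivAt_id x).add_const (σ ^ 2)).sqrt hp.ne'
  have h2 := ((((hasDerivAt_id x).sub_const b).div h1 hr.ne').const_mul β).sub_const (β ^ 2 / 2)
  refine h2.congr_deriv ?_
  simp only [id]
  set r := Real.sqrt (x + σ ^ 2)
  have hx : x = r ^ 2 - σ ^ 2 := by linarith
  field_simp
  rw [hx]
  ring

theorem hf_deriv2 (β b σ x : ℝ) (hp : 0 < x + σ ^ 2) :
    HasDerivAt (fun x : ℝ => β * (x + b + 2 * σ ^ 2) / (2 * Real.sqrt (x + σ ^ 2) ^ 3))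
      (-(β * (x + 3 * b + 4 * σ ^ 2)) / (4 * (x + σ ^ 2) ^ ((5 : ℝ) / 2))) x := by
  have hr := Real.sqrt_pos.mpr hp
  have hsq := Real.sq_sqrt hp.le
  have h5 : (x + σ ^ 2) ^ ((5 : ℝ) / 2) = Real.sqrt (x + σ ^ 2) ^ 5 := by
    rw [Real.sqrt_eq_rpow, ← Real.rpow_natCast (_ ^ ((1 : ℝ) / 2)) 5, ← Real.rpow_mul hp.le]
    norm_num
  have h1 : HasDerivAt (fun x : ℝ => Real.sqrt (x + σ ^ 2)) (1 / (2 * Real.sqrt (x + σ ^ 2))) x :=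
    ((hasDerivAt_id x).add_const (σ ^ 2)).sqrt hp.ne'
  have h2 := ((((hasDerivAt_id x).add_const b).add_const (2 * σ ^ 2)).const_mul β).div
    ((h1.pow 3).const_mul 2) (by simp only [Pi.pow_apply]; positivity)
  refine h2.congr_deriv ?_
  rw [h5]
  simp only [id, Pi.pow_apply]
  set r := Real.sqrt (x + σ ^ 2)
  have hx : x = r ^ 2 - σ ^ 2 := by linarith
  field_simp
  rw [hx]
  push_cast
  ring

/-- Beyond the Huber threshold (for positive scaled residuals), the robust scalar fidelity
ψ(s) = ρ((s − b)/√(s + σ²)) has strictly negative second derivative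
ψ″(s) = −β(s + 3b + 4σ²)/(4(s + σ²)^{5/2}); in particular ψ is not convex on any
neighborhood of such a point. -/
theorem huber_fidelity_nonconvex_beyond_threshold (β b σ s : ℝ) (hβ : 0 < β)
    (hb : 0 ≤ b) (hs : 0 < s)
    (hout : (s - b) / Real.sqrt (s + σ ^ 2) > β) :
    HasDerivAt (deriv (fun s : ℝ => huber β ((s - b) / Real.sqrt (s + σ ^ 2))))
      (-(β * (s + 3 * b + 4 * σ ^ 2)) / (4 * (s + σ ^ 2) ^ ((5 : ℝ) / 2))) s ∧
    -(β * (s + 3 * b + 4 * σ ^ 2)) / (4 * (s + σ ^ 2) ^ ((5 : ℝ) / 2)) < 0 ∧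
    (∀ ε > 0, ¬ ConvexOn ℝ (Set.Ioo (s - ε) (s + ε))
      (fun s : ℝ => huber β ((s - b) / Real.sqrt (s + σ ^ 2)))) := by
  have hp : 0 < s + σ ^ 2 := by positivity
  have hev := hf_eventually β b σ s hs hout hβ
  set ψ : ℝ → ℝ := fun s : ℝ => huber β ((s - b) / Real.sqrt (s + σ ^ 2)) with hψ
  have hd : ∀ᶠ x in nhds s,
      HasDerivAt ψ (β * (x + b + 2 * σ ^ 2) / (2 * Real.sqrt (x + σ ^ 2) ^ 3)) x := by
    filter_upwards [hev.eventually_nhds] with x hx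
    exact (hf_deriv1 β b σ x hx.self_of_nhds.1).congr_of_eventuallyEq (hx.mono fun y hy => hy.2)
  have hD := (hf_deriv2 β b σ s hp).congr_of_eventuallyEq
    (f₁ := deriv ψ) (hd.mono fun x hx => hx.deriv)
  have hneg : -(β * (s + 3 * b + 4 * σ ^ 2)) / (4 * (s + σ ^ 2) ^ ((5 : ℝ) / 2)) < 0 := by
    apply div_neg_of_neg_of_pos
    · have : 0 < β * (s + 3 * b + 4 * σ ^ 2) := by positivity
      linarith
    · positivity
  refine ⟨hD, hneg, ?_⟩
  intro ε hε hconv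
  obtain ⟨δ, hδ, hball⟩ := Metric.eventually_nhds_iff_ball.mp hd
  rw [Real.ball_eq_Ioo] at hball
  have hm0 : 0 < min ε δ := lt_min hε hδ
  have hsub : Set.Ioo (s - min ε δ) (s + min ε δ) ⊆ Set.Ioo (s - ε) (s + ε) :=
    Set.Ioo_subset_Ioo (by linarith [min_le_left ε δ]) (by linarith [min_le_left ε δ])
  have hsub2 : Set.Ioo (s - min ε δ) (s + min ε δ) ⊆ Set.Ioo (s - δ) (s + δ) :=
    Set.Ioo_subset_Ioo (by linarith [min_le_right ε δ]) (by linarith [min_le_right ε δ])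
  have hmono := (hconv.subset hsub (convex_Ioo _ _)).monotoneOn_deriv
    (fun x hx => (hball x (hsub2 hx)).differentiableAt)
  have hsl := (hasDerivAt_iff_tendsto_slope.mp hD).eventually (gt_mem_nhds hneg)
  have hnh : Set.Ioo (s - min ε δ) (s + min ε δ) ∈ nhds s :=
    Ioo_mem_nhds (by linarith) (by linarith)
  have hsl2 := hsl.filter_mono (nhdsWithin_mono s
    (show Set.Ioi s ⊆ {s}ᶜ from fun y hy => ne_of_gt hy))
  obtain ⟨y, ⟨hy1, hy2⟩, hy3⟩ := ((hsl2.and (mem_nhdsWithin_of_mem_nhds hnh)).and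
    self_mem_nhdsWithin).exists
  have hy3' : s < y := hy3
  have hle := hmono (mem_of_mem_nhds hnh) hy2 hy3'.le
  rw [slope_def_field] at hy1
  have : 0 ≤ (deriv ψ y - deriv ψ s) / (y - s) :=
    div_nonneg (by linarith) (by linarith)
  linarith
end

section
/- Let T ≥ 0, L > 0, c ≥ 0, and let ρ : ℝ → ℝ be twice differentiable on (T, ∞) with ρ′(t) ≥ L and 0 ≤ ρ″(t) ≤ c/t² for all t > T. Fix b ≥ 0 and σ ∈ ℝ, and define ψ(s) = ρ((s − b)/√(s + σ²)) for s > −σ². Then there exists S such that for all s > S the function ψ is twice differentiable at s and ψ″(s) < 0. (In other words, a loss whose derivative stays bounded below by a positive constant while its second derivative decays faster than 1/t² yields a nonconvex fidelity for large signal values; convexity forces the loss to be eventually constant or to grow at least quadratically.) -/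
theorem fid_aux1 (b v s : ℝ) (hs : 0 < s + v) :
    HasDerivAt (fun s : ℝ => (s - b) / Real.sqrt (s + v))
      ((s + v + (b + v)) / (2 * Real.sqrt (s + v) ^ 3)) s := by
  have h1 : HasDerivAt (fun s : ℝ => Real.sqrt (s + v)) (1 / (2 * Real.sqrt (s + v))) s :=
    ((hasDerivAt_id s).add_const v).sqrt hs.ne'
  have hw : 0 < Real.sqrt (s + v) := Real.sqrt_pos.2 hs
  have hsq : Real.sqrt (s + v) ^ 2 = s + v := Real.sq_sqrt hs.le
  have h2 := ((hasDerivAt_id s).sub_const b).div h1 hw.ne'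
  refine h2.congr_deriv ?_
  simp only [id]
  generalize Real.sqrt (s + v) = w at *
  obtain rfl : s = w ^ 2 - v := by linarith
  field_simp
  ring

theorem fid_aux2 (b v s : ℝ) (hs : 0 < s + v) :
    HasDerivAt (fun s : ℝ => (s + v + (b + v)) / (2 * Real.sqrt (s + v) ^ 3))
      (-(s + v + 3 * (b + v)) / (4 * Real.sqrt (s + v) ^ 5)) s := by
  have h1 : HasDerivAt (fun s : ℝ => Real.sqrt (s + v)) (1 / (2 * Real.sqrt (s + v))) s :=
    ((hasDerivAt_id s).add_const v).sqrt hs.ne'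
  have hw : 0 < Real.sqrt (s + v) := Real.sqrt_pos.2 hs
  have hsq : Real.sqrt (s + v) ^ 2 = s + v := Real.sq_sqrt hs.le
  have h2 := (((hasDerivAt_id s).add_const v).add_const (b + v)).div ((h1.pow 3).const_mul 2)
    (mul_ne_zero two_ne_zero (pow_ne_zero 3 hw.ne'))
  refine h2.congr_deriv ?_
  simp only [id, Pi.pow_apply]
  generalize Real.sqrt (s + v) = w at *
  obtain rfl : s = w ^ 2 - v := by linarith
  push_cast
  field_simp
  ring

/-- A loss ρ that is twice differentiable on (T, ∞) with derivative bounded below by a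
positive constant L and second derivative decaying like c/t² yields, for any data value
b ≥ 0 and noise parameter σ, a robust scalar fidelity ψ(s) = ρ((s − b)/√(s + σ²)) whose
second derivative is negative for all sufficiently large s: the fidelity is eventually
nonconvex. -/
theorem slowly_growing_loss_yields_nonconvex_fidelity
    (T L c : ℝ) (hT : 0 ≤ T) (hL : 0 < L) (hc : 0 ≤ c)
    (ρ ρ' ρ'' : ℝ → ℝ)
    (hρ' : ∀ t > T, HasDerivAt ρ (ρ' t) t)
    (hρ'' : ∀ t > T, HasDerivAt ρ' (ρ'' t) t)
    (hL' : ∀ t > T, L ≤ ρ' t)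
    (hc' : ∀ t > T, 0 ≤ ρ'' t ∧ ρ'' t ≤ c / t ^ 2)
    (b σ : ℝ) (hb : 0 ≤ b) :
    ∃ S : ℝ, ∀ s > S,
      DifferentiableAt ℝ (fun s : ℝ => ρ ((s - b) / Real.sqrt (s + σ ^ 2))) s ∧
      DifferentiableAt ℝ (deriv (fun s : ℝ => ρ ((s - b) / Real.sqrt (s + σ ^ 2)))) s ∧
      deriv (deriv (fun s : ℝ => ρ ((s - b) / Real.sqrt (s + σ ^ 2)))) s < 0 := by
  have ha : 0 ≤ b + σ ^ 2 := by positivity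
  have hM : 0 ≤ 2 * T + 4 * c / L := by positivity
  have hcL : 0 ≤ 4 * c / L := by positivity
  set S : ℝ := (2 * T + 4 * c / L) ^ 2 + 3 * (b + σ ^ 2) - σ ^ 2 with hS
  have hpos : ∀ s > S, 0 < s + σ ^ 2 := fun s hs => by
    have := sq_nonneg (2 * T + 4 * c / L)
    linarith
  have hwM : ∀ s > S, 2 * T + 4 * c / L < Real.sqrt (s + σ ^ 2) := fun s hs =>
    Real.lt_sqrt_of_sq_lt (by linarith)
  have h3 : ∀ s > S, 3 * (b + σ ^ 2) ≤ s + σ ^ 2 := fun s hs => by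
    have := sq_nonneg (2 * T + 4 * c / L)
    linarith
  have hr : ∀ s > S, T < (s - b) / Real.sqrt (s + σ ^ 2) := fun s hs => by
    have hw := hwM s hs
    have h3' := h3 s hs
    have hw0 : 0 < Real.sqrt (s + σ ^ 2) := Real.sqrt_pos.2 (hpos s hs)
    have hsq : Real.sqrt (s + σ ^ 2) ^ 2 = s + σ ^ 2 := Real.sq_sqrt (hpos s hs).le
    rw [lt_div_iff₀ hw0]
    nlinarith
  have hd1 : ∀ s > S, HasDerivAt (fun s : ℝ => ρ ((s - b) / Real.sqrt (s + σ ^ 2)))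
      (ρ' ((s - b) / Real.sqrt (s + σ ^ 2)) *
        ((s + σ ^ 2 + (b + σ ^ 2)) / (2 * Real.sqrt (s + σ ^ 2) ^ 3))) s := fun s hs =>
    HasDerivAt.comp s (hρ' _ (hr s hs)) (fid_aux1 b (σ ^ 2) s (hpos s hs))
  refine ⟨S, fun s hs => ?_⟩
  have hA : HasDerivAt (fun s : ℝ => ρ' ((s - b) / Real.sqrt (s + σ ^ 2)))
      (ρ'' ((s - b) / Real.sqrt (s + σ ^ 2)) *
        ((s + σ ^ 2 + (b + σ ^ 2)) / (2 * Real.sqrt (s + σ ^ 2) ^ 3))) s :=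
    HasDerivAt.comp s (hρ'' _ (hr s hs)) (fid_aux1 b (σ ^ 2) s (hpos s hs))
  have hB := hA.mul (fid_aux2 b (σ ^ 2) s (hpos s hs))
  have hE : deriv (fun s : ℝ => ρ ((s - b) / Real.sqrt (s + σ ^ 2))) =ᶠ[nhds s]
      ((fun s : ℝ => ρ' ((s - b) / Real.sqrt (s + σ ^ 2))) *
        (fun s : ℝ => (s + σ ^ 2 + (b + σ ^ 2)) / (2 * Real.sqrt (s + σ ^ 2) ^ 3))) := by
    filter_upwards [Ioi_mem_nhds hs] with x hx
    exact (hd1 x hx).deriv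
  have hC := hB.congr_of_eventuallyEq hE
  refine ⟨(hd1 s hs).differentiableAt, hC.differentiableAt, ?_⟩
  rw [hC.deriv]
  have hw := hwM s hs
  have h3' := h3 s hs
  have hr' := hr s hs
  have hw0 : 0 < Real.sqrt (s + σ ^ 2) := Real.sqrt_pos.2 (hpos s hs)
  have hsq : Real.sqrt (s + σ ^ 2) ^ 2 = s + σ ^ 2 := Real.sq_sqrt (hpos s hs).le
  have hLr := hL' _ hr'
  have hcr := (hc' _ hr').2
  generalize ρ'' ((s - b) / Real.sqrt (s + σ ^ 2)) = q at *
  generalize ρ' ((s - b) / Real.sqrt (s + σ ^ 2)) = p at *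
  have hsb : s - b = s + σ ^ 2 - (b + σ ^ 2) := by ring
  rw [hsb] at hcr hr'
  rw [← hsq] at h3' hcr hr' ⊢
  rw [Real.sqrt_sq hw0.le] at *
  generalize Real.sqrt (s + σ ^ 2) = w at *
  generalize b + σ ^ 2 = a at *
  have hw2 : 0 < w ^ 2 := by positivity
  have hwa : 0 < w ^ 2 - a := by linarith
  have e1 : q * ((w ^ 2 + a) / (2 * w ^ 3)) * ((w ^ 2 + a) / (2 * w ^ 3)) ≤ c / w ^ 4 := by
    have k : (w ^ 2 + a) / (2 * w ^ 3) ≤ ((w ^ 2 - a) / w) / w ^ 2 := by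
      rw [div_div, div_le_div_iff₀ (by positivity) (by positivity)]
      have : 0 < w ^ 3 := by positivity
      nlinarith
    have k0 : 0 ≤ (w ^ 2 + a) / (2 * w ^ 3) := by positivity
    calc _ = q * ((w ^ 2 + a) / (2 * w ^ 3)) ^ 2 := by ring
      _ ≤ c / ((w ^ 2 - a) / w) ^ 2 * ((w ^ 2 + a) / (2 * w ^ 3)) ^ 2 := by gcongr
      _ ≤ c / ((w ^ 2 - a) / w) ^ 2 * (((w ^ 2 - a) / w) / w ^ 2) ^ 2 := by gcongr
      _ = c / w ^ 4 := by
        have := hwa.ne'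
        field_simp
  have e2 : p * (-(w ^ 2 + 3 * a) / (4 * w ^ 5)) ≤ - (L / (4 * w ^ 3)) := by
    have k : 1 / (4 * w ^ 3) ≤ (w ^ 2 + 3 * a) / (4 * w ^ 5) := by
      rw [div_le_div_iff₀ (by positivity) (by positivity)]
      have : 0 ≤ w ^ 3 * a := by positivity
      nlinarith
    have hp0 : 0 ≤ p := by linarith
    have : L * (1 / (4 * w ^ 3)) ≤ p * ((w ^ 2 + 3 * a) / (4 * w ^ 5)) := by gcongr
    rw [neg_div, mul_neg, neg_le_neg_iff]
    calc _ = L * (1 / (4 * w ^ 3)) := by ring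
      _ ≤ _ := this
  have e3 : c / w ^ 4 < L / (4 * w ^ 3) := by
    have : 4 * c / L < w := by linarith
    rw [div_lt_iff₀ hL] at this
    rw [div_lt_div_iff₀ (by positivity) (by positivity)]
    have : 0 < w ^ 3 := by positivity
    nlinarith
  linarith
end

section
/- Let A ∈ ℝ^{m×n}, b ∈ ℝ^m, σ ∈ ℝ, and define J(x) = Σ_{i=1}^m ((Ax)_i − b_i)²/(2((Ax)_i + σ²)). If x ∈ ℝ^n satisfies (Ax)_i + σ² > 0 for all i, then for every direction v ∈ ℝ^n the function t ↦ J(x + t v) is twice differentiable at t = 0 and its second derivative at 0 equals Σ_{i=1}^m D_{ii} (Av)_i², where D_{ii} = (b_i + σ²)²/((Ax)_i + σ²)³; that is, the Hessian quadratic form of J at x is v ↦ vᵀ AᵀDA v. -/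
open Matrix

lemma wls_aux1 (p q b s t : ℝ) (h : p + t * q + s ≠ 0) :
    HasDerivAt (fun t : ℝ => (p + t * q - b) ^ 2 / (2 * (p + t * q + s)))
      (q * (1 / 2 - (b + s) ^ 2 / (2 * (p + t * q + s) ^ 2))) t := by
  have h0 : HasDerivAt (fun t : ℝ => p + t * q) q t := by
    simpa using ((hasDerivAt_id t).mul_const q).const_add p
  have h1 := ((h0.sub_const b).pow 2).div ((h0.add_const s).const_mul 2)
    (mul_ne_zero two_ne_zero h)
  refine h1.congr_deriv ?_
  simp only [Pi.pow_apply]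
  field_simp
  ring

lemma wls_aux2 (p q b s : ℝ) (h : p + s ≠ 0) :
    HasDerivAt (fun t : ℝ => q * (1 / 2 - (b + s) ^ 2 / (2 * (p + t * q + s) ^ 2)))
      ((b + s) ^ 2 / (p + s) ^ 3 * q ^ 2) 0 := by
  have h0 : HasDerivAt (fun t : ℝ => p + t * q + s) q 0 := by
    simpa using (((hasDerivAt_id (0 : ℝ)).mul_const q).const_add p).add_const s
  have h2 : (2 : ℝ) * (p + 0 * q + s) ^ 2 ≠ 0 := by
    rw [zero_mul, add_zero]; positivity
  have h1 := (((hasDerivAt_const (0 : ℝ) ((b + s) ^ 2)).div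
    ((h0.pow 2).const_mul 2) h2).const_sub (1 / 2)).const_mul q
  refine h1.congr_deriv ?_
  simp only [Pi.pow_apply, zero_mul, add_zero]
  field_simp
  ring

/-- For the weighted least-squares fidelity J(x) = Σᵢ ((Ax)ᵢ − bᵢ)²/(2((Ax)ᵢ + σ²)) and any
point x with (Ax)ᵢ + σ² > 0, the function t ↦ J(x + t v) is twice differentiable at 0 for
every direction v, with second derivative Σᵢ D_ii (Av)ᵢ², D_ii = (bᵢ + σ²)²/((Ax)ᵢ + σ²)³;
that is, the Hessian quadratic form of J at x is v ↦ vᵀAᵀDAv. -/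
theorem wls_fidelity_hessian_quadratic_form
    (m n : ℕ) (A : Matrix (Fin m) (Fin n) ℝ) (b : Fin m → ℝ) (σ : ℝ)
    (x : Fin n → ℝ) (hpos : ∀ i, 0 < A.mulVec x i + σ ^ 2) :
    ∀ v : Fin n → ℝ,
      DifferentiableAt ℝ
        (fun t : ℝ =>
          ∑ i, (A.mulVec (x + t • v) i - b i) ^ 2 / (2 * (A.mulVec (x + t • v) i + σ ^ 2))) 0 ∧
      HasDerivAt
        (deriv (fun t : ℝ =>
          ∑ i, (A.mulVec (x + t • v) i - b i) ^ 2 / (2 * (A.mulVec (x + t • v) i + σ ^ 2))))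
        (∑ i, (b i + σ ^ 2) ^ 2 / (A.mulVec x i + σ ^ 2) ^ 3 * (A.mulVec v i) ^ 2) 0 ∧
      (∑ i, (b i + σ ^ 2) ^ 2 / (A.mulVec x i + σ ^ 2) ^ 3 * (A.mulVec v i) ^ 2) =
        v ⬝ᵥ ((Aᵀ *
          Matrix.diagonal (fun i => (b i + σ ^ 2) ^ 2 / (A.mulVec x i + σ ^ 2) ^ 3) *
          A).mulVec v) := by
  intro v
  have hlin : ∀ (t : ℝ) i, A.mulVec (x + t • v) i = A.mulVec x i + t * A.mulVec v i := by
    intro t i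
    simp [Matrix.mulVec_add, Matrix.mulVec_smul]
  simp only [hlin]
  have hd : ∀ t : ℝ, (∀ i, A.mulVec x i + t * A.mulVec v i + σ ^ 2 ≠ 0) →
      HasDerivAt (fun t : ℝ => ∑ i, (A.mulVec x i + t * A.mulVec v i - b i) ^ 2 /
        (2 * (A.mulVec x i + t * A.mulVec v i + σ ^ 2)))
        (∑ i, A.mulVec v i * (1 / 2 - (b i + σ ^ 2) ^ 2 /
          (2 * (A.mulVec x i + t * A.mulVec v i + σ ^ 2) ^ 2))) t := by
    intro t ht
    exact HasDerivAt.fun_sum fun i _ => wls_aux1 _ _ _ _ _ (ht i)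
  refine ⟨(hd 0 fun i => by simpa using (hpos i).ne').differentiableAt, ?_, ?_⟩
  · have h2 : HasDerivAt (fun t : ℝ => ∑ i, A.mulVec v i * (1 / 2 - (b i + σ ^ 2) ^ 2 /
          (2 * (A.mulVec x i + t * A.mulVec v i + σ ^ 2) ^ 2)))
        (∑ i, (b i + σ ^ 2) ^ 2 / (A.mulVec x i + σ ^ 2) ^ 3 * (A.mulVec v i) ^ 2) 0 :=
      HasDerivAt.fun_sum fun i _ => wls_aux2 _ _ _ _ (hpos i).ne'
    refine h2.congr_of_eventuallyEq ?_
    have hev : ∀ᶠ t : ℝ in nhds 0, ∀ i, A.mulVec x i + t * A.mulVec v i + σ ^ 2 ≠ 0 := by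
      rw [Filter.eventually_all]
      intro i
      have hc : Continuous fun t : ℝ => A.mulVec x i + t * A.mulVec v i + σ ^ 2 := by fun_prop
      exact hc.continuousAt.eventually_ne (by simpa using (hpos i).ne')
    filter_upwards [hev] with t ht
    exact (hd t ht).deriv
  · rw [← Matrix.mulVec_mulVec, ← Matrix.mulVec_mulVec, Matrix.dotProduct_mulVec,
      Matrix.vecMul_transpose]
    simp only [dotProduct, Matrix.mulVec_diagonal]
    exact Finset.sum_congr rfl fun i _ => by ring
end

section
/- Let ρ : ℝ → ℝ be twice differentiable with ρ′(t) ≥ 0 for all t ≥ 0 and ρ″(t) ≥ 0 for all t. Fix b, σ ∈ ℝ and define ψ(s) = ρ((s − b)/√(s + σ²)) for s > −σ². If s > −σ² satisfies ρ′((s − b)/√(s + σ²)) < 0, then ψ is twice differentiable at s and ψ″(s) > 0. -/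
/-- For a twice differentiable loss ρ with ρ′ ≥ 0 on [0, ∞) and ρ″ ≥ 0 everywhere, the
robust scalar fidelity ψ(s) = ρ((s − b)/√(s + σ²)) has strictly positive second derivative
at any s > −σ² where ρ′ evaluated at the scaled residual is negative. -/
theorem negative_loss_derivative_gives_positive_curvature
    (ρ : ℝ → ℝ) (hρ : Differentiable ℝ ρ) (hρ' : Differentiable ℝ (deriv ρ))
    (hmono : ∀ t : ℝ, 0 ≤ t → 0 ≤ deriv ρ t)
    (hconv : ∀ t : ℝ, 0 ≤ deriv (deriv ρ) t)
    (b σ s : ℝ) (hs : s > -σ ^ 2)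
    (hneg : deriv ρ ((s - b) / Real.sqrt (s + σ ^ 2)) < 0) :
    DifferentiableAt ℝ (deriv (fun s : ℝ => ρ ((s - b) / Real.sqrt (s + σ ^ 2)))) s ∧
    0 < deriv (deriv (fun s : ℝ => ρ ((s - b) / Real.sqrt (s + σ ^ 2)))) s := by
  have hu0 : 0 < s + σ ^ 2 := by linarith
  have hsq : ∀ x : ℝ, 0 < x + σ ^ 2 →
      HasDerivAt (fun x : ℝ => Real.sqrt (x + σ ^ 2)) (1 / (2 * Real.sqrt (x + σ ^ 2))) x := by
    intro x hx
    exact ((hasDerivAt_id x).add_const (σ ^ 2)).sqrt hx.ne'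
  have hg : ∀ x : ℝ, 0 < x + σ ^ 2 →
      HasDerivAt (fun x : ℝ => (x - b) / Real.sqrt (x + σ ^ 2))
        ((x + b + 2 * σ ^ 2) / (2 * (x + σ ^ 2) * Real.sqrt (x + σ ^ 2))) x := by
    intro x hx
    have hr : 0 < Real.sqrt (x + σ ^ 2) := Real.sqrt_pos.2 hx
    have hrr : Real.sqrt (x + σ ^ 2) ^ 2 = x + σ ^ 2 := Real.sq_sqrt hx.le
    have h := ((hasDerivAt_id x).sub_const b).div (hsq x hx) hr.ne'
    refine h.congr_deriv ?_
    simp only [id]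
    rw [hrr]
    field_simp
    rw [hrr]
    ring
  have hh : HasDerivAt
      (fun x : ℝ => (x + b + 2 * σ ^ 2) / (2 * (x + σ ^ 2) * Real.sqrt (x + σ ^ 2)))
      (-(s + σ ^ 2 + 3 * (b + σ ^ 2)) / (4 * (s + σ ^ 2) ^ 2 * Real.sqrt (s + σ ^ 2))) s := by
    have hr : 0 < Real.sqrt (s + σ ^ 2) := Real.sqrt_pos.2 hu0
    have hrr : Real.sqrt (s + σ ^ 2) ^ 2 = s + σ ^ 2 := Real.sq_sqrt hu0.le
    have h := (((hasDerivAt_id s).add_const b).add_const (2 * σ ^ 2)).div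
      ((((hasDerivAt_id s).add_const (σ ^ 2)).const_mul 2).mul (hsq s hu0))
      (by simp only [id, Pi.mul_apply]; positivity)
    refine h.congr_deriv ?_
    simp only [id, Pi.mul_apply]
    generalize Real.sqrt (s + σ ^ 2) = r at hr hrr
    have e : s = r ^ 2 - σ ^ 2 := by linarith
    subst e
    simp only [sub_add_cancel]
    field_simp
    ring
  have hψ : ∀ x : ℝ, 0 < x + σ ^ 2 →
      HasDerivAt (fun s : ℝ => ρ ((s - b) / Real.sqrt (s + σ ^ 2)))
        (deriv ρ ((x - b) / Real.sqrt (x + σ ^ 2)) *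
          ((x + b + 2 * σ ^ 2) / (2 * (x + σ ^ 2) * Real.sqrt (x + σ ^ 2)))) x := by
    intro x hx
    exact (hρ _).hasDerivAt.comp x (hg x hx)
  have hev : deriv (fun s : ℝ => ρ ((s - b) / Real.sqrt (s + σ ^ 2))) =ᶠ[nhds s]
      (fun x => deriv ρ ((x - b) / Real.sqrt (x + σ ^ 2)) *
          ((x + b + 2 * σ ^ 2) / (2 * (x + σ ^ 2) * Real.sqrt (x + σ ^ 2)))) := by
    filter_upwards [Ioi_mem_nhds hs] with x hx
    exact (hψ x (by have : -σ ^ 2 < x := hx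
                    linarith)).deriv
  have hd1 : HasDerivAt (fun x : ℝ => deriv ρ ((x - b) / Real.sqrt (x + σ ^ 2))) _ s :=
    (hρ' _).hasDerivAt.comp s (hg s hu0)
  have hd := (hd1.mul hh).congr_of_eventuallyEq hev
  refine ⟨hd.differentiableAt, ?_⟩
  rw [hd.deriv]
  have hr : 0 < Real.sqrt (s + σ ^ 2) := Real.sqrt_pos.2 hu0
  have hsb : s - b < 0 := by
    by_contra hc
    exact absurd (hmono _ (div_nonneg (not_lt.1 hc) hr.le)) (not_le.2 hneg)
  have h2 : -(s + σ ^ 2 + 3 * (b + σ ^ 2)) / (4 * (s + σ ^ 2) ^ 2 * Real.sqrt (s + σ ^ 2)) < 0 :=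
    div_neg_of_neg_of_pos (by linarith) (by positivity)
  have h3 := mul_pos_of_neg_of_neg hneg h2
  have h4 := mul_nonneg (hconv ((s - b) / Real.sqrt (s + σ ^ 2)))
    (mul_self_nonneg ((s + b + 2 * σ ^ 2) / (2 * (s + σ ^ 2) * Real.sqrt (s + σ ^ 2))))
  rw [← mul_assoc] at h4
  exact add_pos_of_nonneg_of_pos h4 h3
end

section
/- Let β > 0 and let ρ be the Fair loss with parameter β, ρ(t) = β²(|t|/β − log(1 + |t|/β)). Fix b ≥ 0 and σ ∈ ℝ, and define ψ(s) = ρ((s − b)/√(s + σ²)) for s > −σ². Then there exists S such that for all s > S, ψ is twice differentiable at s and ψ″(s) < 0; in particular ψ is not convex on any interval of the form (S, ∞). -/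
theorem fair_hasDerivAt_one (β c r : ℝ) (hβ : 0 < β) (hr : 0 < r) (hrc : c < r ^ 2) :
    HasDerivAt (fun r : ℝ => β ^ 2 * ((r - c / r) / β - Real.log (1 + (r - c / r) / β)))
      (β * (r ^ 2 - c) * (r ^ 2 + c) / (r ^ 2 * (β * r + r ^ 2 - c))) r := by
  have ht : 0 < r - c / r := by
    have : r - c / r = (r ^ 2 - c) / r := by field_simp
    rw [this]; exact div_pos (by linarith) hr
  have h1 : HasDerivAt (fun r : ℝ => (r - c / r) / β) ((1 - (0 * r - c * 1) / r ^ 2) / β) r :=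
    ((hasDerivAt_id r).sub ((hasDerivAt_const r c).div (hasDerivAt_id r) hr.ne')).div_const β
  have hp : 0 < 1 + (r - c / r) / β := by positivity
  have h2 := (h1.sub ((h1.const_add 1).log hp.ne')).const_mul (β ^ 2)
  refine h2.congr_deriv ?_
  have hq : 0 < β * r + r ^ 2 - c := by
    have := mul_pos hβ hr
    linarith
  have e : 1 + (r - c / r) / β = (β * r + r ^ 2 - c) / (β * r) := by
    field_simp
    ring
  rw [e]
  have := hq.ne'
  generalize hQ : β * r + r ^ 2 - c = Q at *
  field_simp
  rw [← hQ]
  ring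

theorem fair_hasDerivAt_two (β c r : ℝ) (hβ : 0 < β) (hr : 0 < r) (hrc : c < r ^ 2) :
    HasDerivAt (fun r : ℝ => β * (r ^ 2 - c) * (r ^ 2 + c) / (r ^ 2 * (β * r + r ^ 2 - c))
        * (1 / (2 * r)))
      (β * (β * r * (r ^ 2 + c) ^ 2 - (r ^ 2 - c) * (β * r + r ^ 2 - c) * (r ^ 2 + 3 * c))
        / (2 * r ^ 4 * (β * r + r ^ 2 - c) ^ 2)) r := by
  have hq : 0 < β * r + r ^ 2 - c := by
    have := mul_pos hβ hr
    linarith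
  have hi := hasDerivAt_id r
  have h2 : HasDerivAt (fun r : ℝ => r ^ 2) (2 * r) r := by
    simpa using hasDerivAt_pow 2 r
  have hQ : HasDerivAt (fun r : ℝ => β * r + r ^ 2 - c) (β * 1 + 2 * r) r :=
    ((hi.const_mul β).add h2).sub_const c
  have hN := ((h2.sub_const c).const_mul β).mul (h2.add_const c)
  have h := (hN.div (h2.mul hQ) (mul_pos (pow_pos hr 2) hq).ne').mul
    ((hasDerivAt_const r (1 : ℝ)).div (hi.const_mul 2) (by simpa using hr.ne'))
  refine h.congr_deriv ?_
  have := hq.ne'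
  simp only [Pi.mul_apply, Pi.div_apply, id]
  field_simp
  ring

theorem fair_hasDerivAt_psi (β c r b σ s : ℝ) (hβ : 0 < β) (hc : c = b + σ ^ 2)
    (hr : r = √(s + σ ^ 2)) (hs : 0 < s + σ ^ 2) (hsb : b < s) :
    HasDerivAt (fun s : ℝ => β ^ 2 * (|(s - b) / √(s + σ ^ 2)| / β -
              Real.log (1 + |(s - b) / √(s + σ ^ 2)| / β)))
      (β * (r ^ 2 - c) * (r ^ 2 + c) / (r ^ 2 * (β * r + r ^ 2 - c)) * (1 / (2 * r))) s := by
  have hr0 : 0 < r := hr ▸ Real.sqrt_pos.2 hs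
  have hr2 : r ^ 2 = s + σ ^ 2 := by rw [hr, Real.sq_sqrt hs.le]
  have hd : HasDerivAt (fun s : ℝ => √(s + σ ^ 2)) (1 / (2 * r)) s := by
    rw [hr]; exact ((hasDerivAt_id s).add_const (σ ^ 2)).sqrt hs.ne'
  have h1 := fair_hasDerivAt_one β c r hβ hr0 (by linarith)
  rw [hr] at h1
  have h := HasDerivAt.comp s h1 hd
  rw [← hr] at h
  refine h.congr_of_eventuallyEq ?_
  filter_upwards [lt_mem_nhds hsb, lt_mem_nhds (show -σ ^ 2 < s by linarith)] with x hx hx2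
  have hx3 : 0 < x + σ ^ 2 := by linarith
  have hx4 := Real.sqrt_pos.2 hx3
  have e : (x - b) / √(x + σ ^ 2) = √(x + σ ^ 2) - c / √(x + σ ^ 2) := by
    field_simp
    rw [Real.sq_sqrt hx3.le, hc]; ring
  have hp : 0 < (x - b) / √(x + σ ^ 2) := div_pos (by linarith) hx4
  rw [abs_of_pos hp, e]
  rfl

/-- The Fair loss ρ(t) = β²(|t|/β − log(1 + |t|/β)) yields a robust scalar fidelity
ψ(s) = ρ((s − b)/√(s + σ²)) whose second derivative is negative for all sufficiently large
s; in particular ψ is not convex on any interval of the form (S, ∞). -/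
theorem fair_fidelity_eventually_nonconvex
    (β : ℝ) (hβ : 0 < β) (b σ : ℝ) (hb : 0 ≤ b) :
    ∃ S : ℝ,
      (∀ s > S,
        DifferentiableAt ℝ
          (deriv (fun s : ℝ =>
            β ^ 2 * (|( (s - b) / Real.sqrt (s + σ ^ 2))| / β -
              Real.log (1 + |(s - b) / Real.sqrt (s + σ ^ 2)| / β)))) s ∧
        deriv (deriv (fun s : ℝ =>
            β ^ 2 * (|(s - b) / Real.sqrt (s + σ ^ 2)| / β -
              Real.log (1 + |(s - b) / Real.sqrt (s + σ ^ 2)| / β)))) s < 0) ∧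
      (∀ S' ≥ S, ¬ ConvexOn ℝ (Set.Ioi S')
        (fun s : ℝ =>
          β ^ 2 * (|(s - b) / Real.sqrt (s + σ ^ 2)| / β -
            Real.log (1 + |(s - b) / Real.sqrt (s + σ ^ 2)| / β)))) := by
  obtain ⟨c, hc⟩ : ∃ c, c = b + σ ^ 2 := ⟨_, rfl⟩
  have hc0 : 0 ≤ c := by rw [hc]; positivity
  set K : ℝ := 1 + 2 * c + 8 * β * c with hK
  have hK1 : 1 + 2 * c ≤ K := by
    have : 0 ≤ 8 * β * c := by positivity
    linarith
  set f : ℝ → ℝ := fun s : ℝ => β ^ 2 * (|(s - b) / √(s + σ ^ 2)| / β -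
              Real.log (1 + |(s - b) / √(s + σ ^ 2)| / β)) with hf
  have hbase : ∀ s > K ^ 2 - σ ^ 2, 0 < s + σ ^ 2 ∧ b < s ∧ K < √(s + σ ^ 2) := by
    intro s hs
    have h1 : K ≤ K ^ 2 := by nlinarith
    refine ⟨by linarith, by linarith, Real.lt_sqrt_of_sq_lt (by linarith)⟩
  have hd1 : ∀ s > K ^ 2 - σ ^ 2, HasDerivAt f _ s := fun s hs =>
    fair_hasDerivAt_psi β c _ b σ s hβ hc rfl (hbase s hs).1 (hbase s hs).2.1
  have hd2 : ∀ s > K ^ 2 - σ ^ 2, ∃ d < 0, HasDerivAt (deriv f) d s := by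
    intro s hs
    obtain ⟨h0, hsb, hKr⟩ := hbase s hs
    obtain ⟨r, hr⟩ : ∃ r, r = √(s + σ ^ 2) := ⟨_, rfl⟩
    have hr2 : r ^ 2 = s + σ ^ 2 := by rw [hr, Real.sq_sqrt h0.le]
    rw [← hr] at hKr
    have hr0 : 0 < r := by linarith
    have hd : HasDerivAt (fun s : ℝ => √(s + σ ^ 2)) (1 / (2 * r)) s := by
      rw [hr]; exact ((hasDerivAt_id s).add_const (σ ^ 2)).sqrt h0.ne'
    have h1 := fair_hasDerivAt_two β c r hβ hr0 (by linarith)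
    rw [hr] at h1
    have h := HasDerivAt.comp s h1 hd
    rw [← hr] at h
    refine ⟨_, ?_, h.congr_of_eventuallyEq ?_⟩
    · have hq : 0 < β * r + r ^ 2 - c := by
        have := mul_pos hβ hr0
        linarith
      refine mul_neg_of_neg_of_pos (div_neg_of_neg_of_pos ?_ (by positivity)) (by positivity)
      refine mul_neg_of_pos_of_neg hβ ?_
      have hr1 : 1 < r := by linarith
      have hu : r ^ 2 / 2 ≤ r ^ 2 - c := by nlinarith
      have h8 : 8 * β * c < r := by linarith
      have hu2 : (r ^ 2 / 2) ^ 2 ≤ (r ^ 2 - c) ^ 2 := by gcongr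
      have h9 : 8 * β * c * r < r ^ 4 := by
        have e1 : 8 * β * c * r < r * r := by gcongr
        have e2 : r * r ≤ r ^ 4 := by
          have : r ^ 2 ≤ r ^ 4 := pow_le_pow_right₀ hr1.le (by norm_num)
          nlinarith
        linarith
      have h10 : β * r * (r ^ 2 + c) < (r ^ 2 - c) * (β * r + r ^ 2 - c) := by nlinarith
      have h11 : β * r * (r ^ 2 + c) ^ 2 ≤ β * r * (r ^ 2 + c) * (r ^ 2 + 3 * c) := by
        rw [sq, ← mul_assoc]
        gcongr
        linarith
      have h12 : β * r * (r ^ 2 + c) * (r ^ 2 + 3 * c)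
          < (r ^ 2 - c) * (β * r + r ^ 2 - c) * (r ^ 2 + 3 * c) := by
        gcongr
      linarith
    · filter_upwards [lt_mem_nhds hs] with x hx
      exact (hd1 x hx).deriv
  refine ⟨K ^ 2 - σ ^ 2, fun s hs => ?_, fun S' hS' hconv => ?_⟩
  · obtain ⟨d, hd, h⟩ := hd2 s hs
    exact ⟨h.differentiableAt, h.deriv ▸ hd⟩
  · have hm := hconv.monotoneOn_deriv
      (fun x hx => (hd1 x (lt_of_le_of_lt hS' hx)).differentiableAt)
    have ha : StrictAntiOn (deriv f) (Set.Ioi S') := by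
      refine strictAntiOn_of_deriv_neg (convex_Ioi S') (fun x hx => ?_) (fun x hx => ?_)
      · obtain ⟨d, hd, h⟩ := hd2 x (lt_of_le_of_lt hS' hx)
        exact h.continuousAt.continuousWithinAt
      · rw [interior_Ioi] at hx
        obtain ⟨d, hd, h⟩ := hd2 x (lt_of_le_of_lt hS' hx)
        exact h.deriv ▸ hd
    have m1 : S' + 1 ∈ Set.Ioi S' := by simp
    have m2 : S' + 2 ∈ Set.Ioi S' := by simp
    have := hm m1 m2 (by linarith)
    have := ha m1 m2 (by linarith)
    linarith
end

section
/- Let β > 0 and let ρ be the logistic loss with parameter β, ρ(t) = β² log(cosh(t/β)). Fix b ≥ 0 and σ ∈ ℝ, and define ψ(s) = ρ((s − b)/√(s + σ²)) for s > −σ². Then there exists S such that for all s > S, ψ is twice differentiable at s and ψ″(s) < 0; in particular ψ is not convex on any interval of the form (S, ∞). -/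
theorem aux_u (β : ℝ) (hβ : 0 < β) (b c s : ℝ) (hs : 0 < s + c) :
    HasDerivAt (fun s : ℝ => (s - b) / Real.sqrt (s + c) / β)
      ((s + b + 2 * c) / (2 * β * Real.sqrt (s + c) ^ 3)) s := by
  have hr : 0 < Real.sqrt (s + c) := Real.sqrt_pos.2 hs
  have hr2 : Real.sqrt (s + c) ^ 2 = s + c := Real.sq_sqrt hs.le
  have h1 : HasDerivAt (fun s : ℝ => Real.sqrt (s + c)) (1 / (2 * Real.sqrt (s + c))) s :=
    ((hasDerivAt_id' s).add_const c).sqrt hs.ne'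
  have h2 := ((((hasDerivAt_id' s).sub_const b).div h1 hr.ne').div_const β)
  refine HasDerivAt.congr_deriv h2 ?_
  clear h2 h1
  generalize Real.sqrt (s + c) = r at *
  obtain rfl : c = r ^ 2 - s := by linarith
  field_simp
  ring

theorem aux_u1 (β : ℝ) (hβ : 0 < β) (b c s : ℝ) (hs : 0 < s + c) :
    HasDerivAt (fun s : ℝ => (s + b + 2 * c) / (2 * β * Real.sqrt (s + c) ^ 3))
      (-(s + 3 * b + 4 * c) / (4 * β * Real.sqrt (s + c) ^ 5)) s := by
  have hr : 0 < Real.sqrt (s + c) := Real.sqrt_pos.2 hs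
  have hr2 : Real.sqrt (s + c) ^ 2 = s + c := Real.sq_sqrt hs.le
  have h1 : HasDerivAt (fun s : ℝ => Real.sqrt (s + c)) (1 / (2 * Real.sqrt (s + c))) s :=
    ((hasDerivAt_id' s).add_const c).sqrt hs.ne'
  have h2 := (((hasDerivAt_id' s).add_const b).add_const (2 * c)).div
    ((h1.fun_pow 3).const_mul (2 * β)) (by positivity)
  refine HasDerivAt.congr_deriv h2 ?_
  clear h2 h1
  generalize Real.sqrt (s + c) = r at *
  obtain rfl : c = r ^ 2 - s := by linarith
  field_simp
  push_cast
  ring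

theorem aux_f (β : ℝ) (hβ : 0 < β) (b c s : ℝ) (hs : 0 < s + c) :
    HasDerivAt (fun s : ℝ =>
            β ^ 2 * Real.log (Real.cosh ((s - b) / Real.sqrt (s + c) / β)))
      (β ^ 2 * (Real.sinh ((s - b) / Real.sqrt (s + c) / β)
        * ((s + b + 2 * c) / (2 * β * Real.sqrt (s + c) ^ 3))
        / Real.cosh ((s - b) / Real.sqrt (s + c) / β))) s :=
  (((aux_u β hβ b c s hs).cosh).log (Real.cosh_pos _).ne').const_mul (β ^ 2)

theorem aux_f2 (β : ℝ) (hβ : 0 < β) (b c s : ℝ) (hb : 0 ≤ b) (hc : 0 ≤ c)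
    (hs : 2 * (b + c) + 64 * β ^ 2 < s) :
    ∃ d < 0, HasDerivAt (deriv (fun s : ℝ =>
            β ^ 2 * Real.log (Real.cosh ((s - b) / Real.sqrt (s + c) / β)))) d s := by
  have hβ2 : 0 < β ^ 2 := by positivity
  have hx : 0 < s + c := by linarith
  have hr : 0 < Real.sqrt (s + c) := Real.sqrt_pos.2 hx
  have hr2 : Real.sqrt (s + c) ^ 2 = s + c := Real.sq_sqrt hx.le
  have hu := aux_u β hβ b c s hx
  have h := (((hu.sinh).mul (aux_u1 β hβ b c s hx)).div hu.cosh
    (Real.cosh_pos _).ne').const_mul (β ^ 2)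
  refine ⟨_, ?_, h.congr_of_eventuallyEq ?_⟩
  · have hub : Real.sqrt (s + c) / (2 * β) ≤ (s - b) / Real.sqrt (s + c) / β := by
      rw [div_div, div_le_div_iff₀ (by positivity) (by positivity)]
      have : Real.sqrt (s + c) ^ 2 * β ≤ (s - b) * (2 * β) := by
        rw [hr2]; nlinarith
      linarith
    simp only [Pi.mul_apply]
    generalize (s - b) / Real.sqrt (s + c) / β = u at *
    have hu0 : 0 < u := lt_of_lt_of_le (by positivity) hub
    have hsu : u ≤ Real.sinh u := Real.self_le_sinh_iff.2 hu0.le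
    have hcs : Real.sinh u < Real.cosh u := Real.sinh_lt_cosh u
    have hid : Real.cosh u ^ 2 = Real.sinh u ^ 2 + 1 := Real.cosh_sq u
    have hcp := Real.cosh_pos u
    generalize Real.sinh u = S at *
    generalize Real.cosh u = C at *
    generalize Real.sqrt (s + c) = r at *
    have hr8 : 8 * β < r := by
      apply lt_of_pow_lt_pow_left₀ 2 hr.le
      rw [hr2]; nlinarith
    have hur : r ≤ 2 * β * u := by
      rw [div_le_iff₀ (by positivity)] at hub; linarith
    have h1 : u * u ≤ S * C := by nlinarith
    have h2 : 2 * r < β * (S * C) := by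
      have h3 : r * r ≤ (2 * β * u) * (2 * β * u) := by gcongr
      have h4 : r * r ≤ 4 * β * (β * (S * C)) := by nlinarith
      by_contra hcon
      push Not at hcon
      nlinarith
    obtain rfl : s = r ^ 2 - c := by linarith
    have key : (r ^ 2 + b + c) ^ 2 < β * r * (r ^ 2 + 3 * b + 3 * c) * (S * C) := by
      have h5 : (r ^ 2 + b + c) ^ 2 ≤ 2 * r ^ 2 * (r ^ 2 + 3 * b + 3 * c) := by
        have : r ^ 2 + b + c ≤ 2 * r ^ 2 := by linarith
        have h6 : 0 ≤ r ^ 2 + b + c := by positivity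
        nlinarith
      have h7 : 0 < r * (r ^ 2 + 3 * b + 3 * c) := by positivity
      nlinarith
    have e : β ^ 2 * (((C * ((r ^ 2 - c + b + 2 * c) / (2 * β * r ^ 3)) * ((r ^ 2 - c + b + 2 * c) / (2 * β * r ^ 3)) + S * (-(r ^ 2 - c + 3 * b + 4 * c) / (4 * β * r ^ 5))) * C - S * ((r ^ 2 - c + b + 2 * c) / (2 * β * r ^ 3)) * (S * ((r ^ 2 - c + b + 2 * c) / (2 * β * r ^ 3)))) / C ^ 2)
      = ((r ^ 2 + b + c) ^ 2 * (C ^ 2 - S ^ 2) - β * r * (r ^ 2 + 3 * b + 3 * c) * (S * C)) / (4 * r ^ 6 * C ^ 2) := by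
      field_simp
      ring
    rw [e]
    apply div_neg_of_neg_of_pos _ (by positivity)
    rw [hid]
    linarith
  · filter_upwards [lt_mem_nhds (show -c < s by linarith)] with y hy
    exact (aux_f β hβ b c y (by linarith)).deriv

/-- The logistic loss ρ(t) = β² log(cosh(t/β)) yields a robust scalar fidelity
ψ(s) = ρ((s − b)/√(s + σ²)) whose second derivative is negative for all sufficiently large
s; in particular ψ is not convex on any interval of the form (S, ∞). -/
theorem logistic_fidelity_eventually_nonconvex
    (β : ℝ) (hβ : 0 < β) (b σ : ℝ) (hb : 0 ≤ b) :
    ∃ S : ℝ,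
      (∀ s > S,
        DifferentiableAt ℝ
          (deriv (fun s : ℝ =>
            β ^ 2 * Real.log (Real.cosh ((s - b) / Real.sqrt (s + σ ^ 2) / β)))) s ∧
        deriv (deriv (fun s : ℝ =>
            β ^ 2 * Real.log (Real.cosh ((s - b) / Real.sqrt (s + σ ^ 2) / β)))) s < 0) ∧
      (∀ S' ≥ S, ¬ ConvexOn ℝ (Set.Ioi S')
        (fun s : ℝ =>
          β ^ 2 * Real.log (Real.cosh ((s - b) / Real.sqrt (s + σ ^ 2) / β)))) := by
  have H := fun s hs => aux_f2 β hβ b (σ ^ 2) s hb (sq_nonneg σ) hs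
  have hS : 0 < 2 * (b + σ ^ 2) + 64 * β ^ 2 := by positivity
  refine ⟨2 * (b + σ ^ 2) + 64 * β ^ 2, fun s hs => ?_, fun S' hS' hconv => ?_⟩
  · obtain ⟨d, hd, h⟩ := H s hs
    exact ⟨h.differentiableAt, by rw [h.deriv]; exact hd⟩
  · have hcc := strictConcaveOn_of_deriv2_neg (convex_Ioi S') (f := fun s : ℝ =>
          β ^ 2 * Real.log (Real.cosh ((s - b) / Real.sqrt (s + σ ^ 2) / β)))
      (fun x hx => (aux_f β hβ b (σ ^ 2) x
        (by have := Set.mem_Ioi.1 hx; linarith [sq_nonneg σ])).continuousAt.continuousWithinAt)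
      (fun x hx => by
        rw [interior_Ioi] at hx
        obtain ⟨d, hd, h⟩ := H x (lt_of_le_of_lt hS' hx)
        simp only [Function.iterate_succ, Function.iterate_zero, Function.comp, id]
        rw [h.deriv]; exact hd)
    have m1 : S' + 1 ∈ Set.Ioi S' := by simp
    have m2 : S' + 2 ∈ Set.Ioi S' := by simp
    have hlt := hcc.2 m1 m2 (by simp)
      (by norm_num : (0 : ℝ) < 1 / 2) (by norm_num : (0 : ℝ) < 1 / 2) (by norm_num)
    have hle := hconv.2 m1 m2
      (by norm_num : (0 : ℝ) ≤ 1 / 2) (by norm_num : (0 : ℝ) ≤ 1 / 2) (by norm_num)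
    exact absurd hlt (not_lt.2 hle)
end
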